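/- Let n ≥ 1 and let H ∈ ℂ[x,y] be a polynomial of degree n+1 that is regular at infinity. If H has only one critical value, i.e. there exists γ ∈ ℂ such that H(x₀,y₀) = γ at every critical point (x₀,y₀) of H, then H has exactly one critical point: there is a unique (x₀,y₀) ∈ ℂ² with H_x(x₀,y₀) = H_y(x₀,y₀) = 0. -/

import Mathlib

open MvPolynomial Finset

/-- A polynomial `H` of degree `n+1` is regular at infinity if its principal
homogeneous part `Ĥ` has an isolated critical point at the origin: `(0,0)` is
the only common zero of `Ĥ_x` and `Ĥ_y` in `ℂ²`. -/
def RegularAtInfinity (n : ℕ) (H : MvPolynomial (Fin 2) ℂ) : Prop :=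
  ∀ x y : ℂ,
    eval ![x, y] (pderiv 0 (homogeneousComponent (n + 1) H)) = 0 →
    eval ![x, y] (pderiv 1 (homogeneousComponent (n + 1) H)) = 0 →
    x = 0 ∧ y = 0

/-!
Put `uᵢ = ∂ᵢH` and normalise the critical value to `0`. Regularity at infinity makes the gradient
map `u` finite, so `ℂ(x)` is a finite extension of `ℂ(u)` and carries the Euler derivation `E` with
`E uᵢ = uᵢ`. The Legendre transform `G = ∑ xᵢ uᵢ - H` satisfies `∂G/∂uⱼ = xⱼ` and `E G = ∑ xᵢ uᵢ`,
and the single critical value says that `G` vanishes on the critical set. Let `k` be the field of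
constants of `E` and `s = uᵢ` a nonzero partial derivative. At a place of `ℂ(x)` over `s = 0`, `E`
acts as a logarithmic derivation, so it preserves the order of vanishing of `G`, while `E G` is
divisible by `s`; hence `G / s` is integral over `k[s]`. On the other hand
`K = ∑ xᵢ uᵢ - (n + 1) H = (n + 1) G - n E G` has degree at most `n`, so `K / s` also has no pole
over `s = ∞`. Therefore `K / s` is algebraic over `k`, that is, `E K = K`.

Applying `∂/∂uⱼ` to `E K = K` gives `E (xⱼ - n E xⱼ) = 0`, so `T = n E` splits `xⱼ` into components
`T xⱼ` of weight one and `xⱼ - T xⱼ` of weight zero, whereas `uᵢ` has weight `n`. The weight-zero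
components satisfy `u = 0`, so by finiteness they are constants `rⱼ`, and `u` is homogeneous of
degree `n` about the point `r`. A second zero of `u` would produce a line of zeros, contradicting
finiteness.
-/

/-! ### Polynomial families without common zeros at infinity -/

section LeadingForms

variable {σ R : Type*} [CommRing R]

theorem homogeneousComponent_mul_of_isHomogeneous {g h : MvPolynomial σ R} {n d : ℕ}
    (hh : h.IsHomogeneous n) (hnd : n ≤ d) :
    homogeneousComponent d (g * h) = homogeneousComponent (d - n) g * h := by
  have hterm (i : ℕ) : homogeneousComponent d (homogeneousComponent i g * h) =
      if d - n = i then homogeneousComponent i g * h else 0 := by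
    rw [homogeneousComponent_of_mem ((homogeneousComponent_isHomogeneous i g).mul hh)]
    exact if_congr (by omega) rfl rfl
  conv_lhs => rw [← sum_homogeneousComponent g]
  simp only [Finset.sum_mul, map_sum, hterm, Finset.sum_ite_eq, Finset.mem_range]
  split_ifs with hlt
  · rfl
  · rw [homogeneousComponent_eq_zero _ _ (by omega), zero_mul]

theorem totalDegree_sub_homogeneousComponent_lt {f : MvPolynomial σ R} {d : ℕ} (hd : 0 < d)
    (hf : f.totalDegree ≤ d) : (f - homogeneousComponent d f).totalDegree < d := by
  refine (Finset.sup_lt_iff hd).mpr fun s hs ↦ ?_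
  have hs' : coeff s f ≠ 0 ∧ s.degree ≠ d := by
    simpa [mem_support_iff, coeff_homogeneousComponent, sub_eq_zero, and_comm] using hs
  exact lt_of_le_of_ne ((le_totalDegree (mem_support_iff.mpr hs'.1)).trans hf) hs'.2

theorem homogeneousComponent_pderiv (n : ℕ) (i : σ) (f : MvPolynomial σ R) :
    homogeneousComponent n (pderiv i f) = pderiv i (homogeneousComponent (n + 1) f) := by
  ext m
  simp only [coeff_pderiv, coeff_homogeneousComponent, map_add, Finsupp.degree_single,
    add_left_inj, ite_mul, zero_mul]

theorem totalDegree_pderiv_le {n : ℕ} (i : σ) {f : MvPolynomial σ R}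
    (hf : f.totalDegree ≤ n + 1) : (pderiv i f).totalDegree ≤ n := by
  refine Finset.sup_le fun m hm ↦ ?_
  rw [mem_support_iff, coeff_pderiv] at hm
  have hle : (m + Finsupp.single i 1).degree ≤ n + 1 :=
    (le_totalDegree (mem_support_iff.mpr (left_ne_zero_of_mul hm))).trans hf
  rw [map_add, Finsupp.degree_single] at hle
  exact Nat.le_of_succ_le_succ hle

end LeadingForms

theorem mem_radical_span_of_forall_eval_eq_zero {σ ι F : Type*} [Finite σ] [Field F]
    [IsAlgClosed F] {u : ι → MvPolynomial σ F} {f : MvPolynomial σ F}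
    (h : ∀ z, (∀ i, eval z (u i) = 0) → eval z f = 0) :
    f ∈ (Ideal.span (Set.range u)).radical := by
  rw [← vanishingIdeal_zeroLocus_eq_radical (K := F), mem_vanishingIdeal_iff]
  exact fun z hz ↦ h z fun i ↦ mem_zeroLocus_iff.mp hz _ (Ideal.subset_span ⟨i, rfl⟩)

/-- The family `u` has degree at most `n` and its degree-`n` parts vanish simultaneously only at
the origin, i.e. the hypersurfaces `u i = c i` have no common point at infinity. -/
structure NondegenerateAtInfinity {σ ι F : Type*} [CommRing F] (n : ℕ)
    (u : ι → MvPolynomial σ F) : Prop where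
  totalDegree_le (i : ι) : (u i).totalDegree ≤ n
  eq_zero_of_eval_eq_zero (z : σ → F) :
    (∀ i, eval z (homogeneousComponent n (u i)) = 0) → z = 0

theorem isIntegral_of_forall_mem_valuationSubring {R K : Type*} [CommRing R] [Field K]
    [Algebra R K] {x : K}
    (h : ∀ V : ValuationSubring K, (∀ r : R, algebraMap R K r ∈ V) → x ∈ V) : IsIntegral R x := by
  by_contra hx
  obtain ⟨V, hV, hxV⟩ := Subring.exists_le_valuationSubring_of_isIntegrallyClosedIn
    (R := (integralClosure R K).toSubring) hx
  exact hxV (h V fun r ↦ hV (isIntegral_algebraMap : IsIntegral R _))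

theorem valuation_le_pow_of_totalDegree_le {σ R Γ : Type*} [CommRing R]
    [LinearOrderedCommGroupWithZero Γ] (v : Valuation (MvPolynomial σ R) Γ)
    (hC : ∀ c, v (C c) ≤ 1) {ρ : Γ} (hρ : 1 ≤ ρ) (hX : ∀ i, v (X i) ≤ ρ)
    {f : MvPolynomial σ R} {d : ℕ} (hf : f.totalDegree ≤ d) : v f ≤ ρ ^ d := by
  rw [f.as_sum]
  refine v.map_sum_le fun s hs ↦ ?_
  rw [monomial_eq, map_mul, map_finsuppProd]
  have hprod : s.prod (fun i e ↦ v (X i ^ e)) ≤ ρ ^ s.degree := by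
    rw [Finsupp.degree_apply, ← Finset.prod_pow_eq_pow_sum]
    exact Finset.prod_le_prod' fun i _ ↦ (map_pow v _ _).trans_le (pow_le_pow_left' (hX i) _)
  exact (mul_le_mul' (hC _) hprod).trans
    ((one_mul _).trans_le (pow_le_pow_right' hρ ((le_totalDegree hs).trans hf)))

namespace NondegenerateAtInfinity

variable {σ ι F : Type*} [Finite σ] [Field F] [IsAlgClosed F] {n : ℕ} {u : ι → MvPolynomial σ F}

theorem X_mem_radical (hu : NondegenerateAtInfinity n u) (i : σ) :
    X i ∈ (Ideal.span (Set.range fun b ↦ homogeneousComponent n (u b))).radical :=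
  mem_radical_span_of_forall_eval_eq_zero fun z hz ↦ by simp [hu.eq_zero_of_eval_eq_zero z hz]

theorem exists_X_pow_eq_sum_mul_add [Fintype ι]
    (hu : NondegenerateAtInfinity n u) (hn : 0 < n) (i : σ) :
    ∃ (M : ℕ) (g : ι → MvPolynomial σ F) (r : MvPolynomial σ F), n ≤ M ∧
      (∀ b, (g b).totalDegree ≤ M - n) ∧ r.totalDegree < M ∧ X i ^ M = ∑ b, g b * u b + r := by
  obtain ⟨m, hm⟩ := Ideal.mem_radical_iff.mp (hu.X_mem_radical i)
  obtain ⟨c, hc⟩ := (Ideal.mem_span_range_iff_exists_fun).mp (Ideal.mul_mem_left _ (X i ^ n) hm)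
  set M := n + m
  set g : ι → MvPolynomial σ F := fun b ↦ homogeneousComponent (M - n) (c b)
  have hg (b : ι) : (g b).totalDegree ≤ M - n :=
    (homogeneousComponent_isHomogeneous (M - n) (c b)).totalDegree_le
  have hlead : X i ^ M = ∑ b, g b * homogeneousComponent n (u b) := by
    rw [← homogeneousComponent_eq_self (isHomogeneous_X_pow i M), pow_add, ← hc, map_sum]
    exact Finset.sum_congr rfl fun b _ ↦ homogeneousComponent_mul_of_isHomogeneous
      (homogeneousComponent_isHomogeneous _ _) (Nat.le_add_right n m)
  refine ⟨M, g, -∑ b, g b * (u b - homogeneousComponent n (u b)), Nat.le_add_right n m, hg, ?_, ?_⟩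
  · rw [totalDegree_neg]
    refine Nat.lt_of_le_pred (by omega) (totalDegree_finsetSum_le fun b _ ↦ ?_)
    have hlt := totalDegree_sub_homogeneousComponent_lt hn (hu.totalDegree_le b)
    exact (totalDegree_mul _ _).trans (Nat.le_pred_of_lt (by have := hg b; omega))
  · simp only [mul_sub, Finset.sum_sub_distrib, ← hlead]
    ring

variable [Finite ι]

theorem valuation_le_one_or_exists_le (hu : NondegenerateAtInfinity n u) (hn : 0 < n) {Γ : Type*}
    [LinearOrderedCommGroupWithZero Γ] (v : Valuation (MvPolynomial σ F) Γ)
    (hC : ∀ c, v (C c) ≤ 1) {f : MvPolynomial σ F} (hf : f.totalDegree ≤ n) :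
    v f ≤ 1 ∨ ∃ b, v f ≤ v (u b) := by
  by_cases hX : ∀ i, v (X i) ≤ 1
  · exact .inl (by simpa using valuation_le_pow_of_totalDegree_le v hC le_rfl hX hf)
  push Not at hX
  obtain ⟨j, hj⟩ := hX
  have : Nonempty σ := ⟨j⟩
  obtain ⟨i, hi⟩ := Finite.exists_max fun i ↦ v (X i)
  set ρ := v (X i)
  have hρ : 1 < ρ := hj.trans_le (hi j)
  have hbound {f : MvPolynomial σ F} {d : ℕ} (hf : f.totalDegree ≤ d) : v f ≤ ρ ^ d :=
    valuation_le_pow_of_totalDegree_le v hC hρ.le hi hf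
  by_contra! hlt
  cases nonempty_fintype ι
  obtain ⟨M, g, r, hnM, hg, hr, hXM⟩ := hu.exists_X_pow_eq_sum_mul_add hn i
  have hpos (d : ℕ) : 0 < ρ ^ d := pow_pos (zero_lt_one.trans hρ) d
  have hsum : v (∑ b, g b * u b) < ρ ^ M := v.map_sum_lt (hpos M).ne' fun b _ ↦ by
    rw [map_mul, ← Nat.sub_add_cancel hnM, pow_add]
    exact mul_lt_mul_of_le_of_lt_of_nonneg_of_pos (hbound (hg b))
      ((hlt.2 b).trans_le (hbound hf)) zero_le (hpos _)
  have hrM : v r < ρ ^ M := (hbound (Nat.le_sub_one_of_lt hr)).trans_lt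
    (pow_lt_pow_right₀ hρ (by omega))
  have := v.map_add_lt hsum hrM
  rw [← hXM, map_pow] at this
  exact this.false

theorem isIntegral_adjoin (hu : NondegenerateAtInfinity n u) (hn : 0 < n) (f : MvPolynomial σ F) :
    IsIntegral (Algebra.adjoin F (Set.range u)) f := by
  set A := Algebra.adjoin F (Set.range u)
  have hX (i : σ) : IsIntegral A (X i : MvPolynomial σ F) := by
    rw [← isIntegral_algebraMap_iff (IsFractionRing.injective (MvPolynomial σ F)
      (FractionRing (MvPolynomial σ F)))]
    refine isIntegral_of_forall_mem_valuationSubring fun V hV ↦ ?_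
    have hA {a : MvPolynomial σ F} (ha : a ∈ A) : V.valuation (algebraMap _ _ a) ≤ 1 :=
      (V.valuation_le_one_iff _).mpr (hV ⟨a, ha⟩)
    rw [← V.valuation_le_one_iff]
    rcases hu.valuation_le_one_or_exists_le hn (V.valuation.comap (algebraMap _ _))
      (fun c ↦ hA (A.algebraMap_mem c)) (f := X i) (by rw [totalDegree_X]; omega) with h | ⟨b, hb⟩
    · exact h
    · exact hb.trans (hA (Algebra.subset_adjoin ⟨b, rfl⟩))
  induction f using MvPolynomial.induction_on with
  | C a => exact isIntegral_algebraMap (R := A) (x := algebraMap F A a)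
  | add p q hp hq => exact hp.add hq
  | mul_X p i hp => exact hp.mul (hX i)

end NondegenerateAtInfinity

/-! ### Derivations and transcendence bases -/

section Extension

open KaehlerDifferential TensorProduct

theorem existsUnique_derivation_algebraMap_eq {R S T M : Type*} [CommRing R] [CommRing S]
    [CommRing T] [Algebra R S] [Algebra R T] [Algebra S T] [IsScalarTower R S T]
    [Algebra.FormallyEtale S T] [AddCommGroup M] [Module R M] [Module S M] [Module T M]
    [IsScalarTower R S M] [IsScalarTower R T M] [IsScalarTower S T M] (d : Derivation R S M) :
    ∃! D : Derivation R T M, ∀ s, D (algebraMap S T s) = d s := by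
  set e := tensorKaehlerEquivOfFormallyEtale R S T
  have he (s : S) : e.symm (D R T (algebraMap S T s)) = 1 ⊗ₜ D R S s :=
    tensorKaehlerEquivOfFormallyEtale_symm_D_algebraMap R S T s
  refine ⟨((d.liftKaehlerDifferential.liftBaseChange T).comp e.symm.toLinearMap).compDer (D R T),
    fun s ↦ by simp [he], fun D' hD' ↦ ?_⟩
  suffices h : D'.liftKaehlerDifferential.comp e.toLinearMap =
      d.liftKaehlerDifferential.liftBaseChange T by
    ext t
    simp [← h]
  ext s
  simp [e, hD']

theorem formallyEtale_mvPolynomial_of_isTranscendenceBasis {ι F L : Type*} [Field F] [Field L]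
    [Algebra F L] [CharZero F] {u : ι → L} (hu : IsTranscendenceBasis F u) :
    letI := (aeval (R := F) u).toAlgebra
    Algebra.FormallyEtale (MvPolynomial ι F) L := by
  let := (aeval (R := F) u).toAlgebra
  set S := MvPolynomial ι F
  have : FaithfulSMul S L := (faithfulSMul_iff_algebraMap_injective S L).mpr hu.1
  let := FractionRing.liftAlgebra S L
  have := hu.isAlgebraic
  have : Algebra.IsAlgebraic S L :=
    .of_ringHom_of_comp_eq hu.1.aevalEquiv (RingHom.id L) hu.1.aevalEquiv.surjective
      Function.injective_id (by ext <;> simp [RingHom.algebraMap_toAlgebra])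
  have : Algebra.IsAlgebraic (FractionRing S) L :=
    (IsFractionRing.comap_isAlgebraic_iff (A := S)).mp this
  have := Algebra.FormallyEtale.of_isLocalization (Rₘ := FractionRing S) (nonZeroDivisors S)
  have := Algebra.FormallyEtale.of_isSeparable (FractionRing S) L
  exact Algebra.FormallyEtale.comp S (FractionRing S) L

theorem existsUnique_derivation_of_isTranscendenceBasis {ι F L : Type*} [Field F] [Field L]
    [Algebra F L] [CharZero F] {u : ι → L} (hu : IsTranscendenceBasis F u) (b : ι → L) :
    ∃! D : Derivation F L L, ∀ i, D (u i) = b i := by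
  let := (aeval (R := F) u).toAlgebra
  have := formallyEtale_mvPolynomial_of_isTranscendenceBasis hu
  have hX (i : ι) : algebraMap (MvPolynomial ι F) L (X i) = u i := aeval_X u i
  have hiff (D : Derivation F L L) : (∀ s, D (algebraMap (MvPolynomial ι F) L s) =
      mkDerivation F b s) ↔ ∀ i, D (u i) = b i := by
    refine ⟨fun h i ↦ by simpa [hX] using h (X i), fun h s ↦ ?_⟩
    refine DFunLike.congr_fun (?_ : D.compAlgebraMap (MvPolynomial ι F) = mkDerivation F b) s
    exact derivation_ext fun i ↦ by simp [hX, h]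
  simpa only [hiff] using existsUnique_derivation_algebraMap_eq (T := L) (mkDerivation F b)

end Extension

theorem derivation_sum_apply {ι R A M : Type*} [CommRing R] [CommRing A] [Algebra R A]
    [AddCommGroup M] [Module R M] [Module A M] (s : Finset ι) (D : ι → Derivation R A M) (a : A) :
    (∑ i ∈ s, D i) a = ∑ i ∈ s, D i a :=
  (congrFun (map_sum Derivation.coeFnAddMonoidHom D s) a).trans (Finset.sum_apply ..)

theorem derivation_eq_sum_pderiv_smul {σ R M : Type*} [Fintype σ] [CommRing R] [AddCommGroup M]
    [Module R M] [Module (MvPolynomial σ R) M] [IsScalarTower R (MvPolynomial σ R) M]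
    (D : Derivation R (MvPolynomial σ R) M) (f : MvPolynomial σ R) :
    D f = ∑ i, pderiv i f • D (X i) := by
  classical
  suffices h : D = ∑ i, (LinearMap.toSpanSingleton (MvPolynomial σ R) M (D (X i))).compDer
      (pderiv i) by
    conv_lhs => rw [h, derivation_sum_apply]
    simp
  refine derivation_ext fun j ↦ ?_
  simp [derivation_sum_apply, pderiv_X, Pi.single_apply]

/-! ### Derivations and discrete valuations -/

section LogarithmicDerivation

open WithZero Polynomial

variable {k L : Type*} [Field k] [Field L] [Algebra k L] {v : Valuation L ℤᵐ⁰}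
  {E : Derivation k L L}

theorem valuation_algebraMap_eq_one (hv : ∀ c : k, v (algebraMap k L c) ≤ 1) {c : k}
    (hc : c ≠ 0) : v (algebraMap k L c) = 1 := by
  refine (hv c).antisymm ?_
  have hinv := hv c⁻¹
  rwa [map_inv₀, map_inv₀, inv_le_one₀ (by simpa [zero_lt_iff] using hc)] at hinv

theorem valuation_natCast_eq_one [CharZero k] (hv : ∀ c : k, v (algebraMap k L c) ≤ 1) {m : ℕ}
    (hm : m ≠ 0) : v (m : L) = 1 := by
  simpa using valuation_algebraMap_eq_one hv (Nat.cast_ne_zero.mpr hm)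

theorem valuation_aeval_le_one (hv : ∀ c : k, v (algebraMap k L c) ≤ 1) {h : L} (hh : v h ≤ 1)
    (q : k[X]) : v (Polynomial.aeval h q) ≤ 1 := by
  rw [Polynomial.aeval_eq_sum_range]
  refine v.map_sum_le fun i _ ↦ ?_
  rw [Algebra.smul_def, map_mul, map_pow]
  exact mul_le_one' (hv _) (pow_le_one' hh i)

/- A polynomial of least degree which is small at `h` has a unit derivative at `h`. -/
theorem exists_valuation_lt_one_and_derivation_eq [CharZero k]
    (hv : ∀ c : k, v (algebraMap k L c) ≤ 1) {h : L} (hh : v h ≤ 1)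
    (halg : ∃ q : k[X], q ≠ 0 ∧ v (Polynomial.aeval h q) < 1) :
    ∃ f, v f < 1 ∧ v (E f) = v (E h) := by
  obtain ⟨q, ⟨hq0, hq⟩, hmin⟩ := exists_minimalFor_of_wellFoundedLT
    (fun q : k[X] ↦ q ≠ 0 ∧ v (Polynomial.aeval h q) < 1) Polynomial.natDegree halg
  have hdeg : q.natDegree ≠ 0 := fun h0 ↦ by
    obtain ⟨c, rfl⟩ := Polynomial.natDegree_eq_zero.mp h0
    rw [Polynomial.aeval_C, valuation_algebraMap_eq_one hv (by simpa using hq0)] at hq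
    exact hq.false
  have hq' : v (Polynomial.aeval h (derivative q)) = 1 := by
    refine (valuation_aeval_le_one hv hh _).antisymm (not_lt.mp fun hlt ↦ ?_)
    have hlt' := Polynomial.natDegree_derivative_lt hdeg
    exact hlt'.not_ge (hmin ⟨fun h0 ↦ hdeg (Polynomial.derivative_eq_zero.mp h0),
      hlt⟩ hlt'.le)
  refine ⟨Polynomial.aeval h q, hq, ?_⟩
  rw [E.map_aeval, smul_eq_mul, map_mul, hq', one_mul]

theorem exists_unit_valuation_derivation_eq {s : L} (hs0 : s ≠ 0) (hs : v s < 1) (hEs : E s = s)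
    {f : L} (hf0 : f ≠ 0) (hf : v f < 1) :
    ∃ (a e : ℕ) (h : L), a ≠ 0 ∧ e ≠ 0 ∧ v h = 1 ∧ v (E h) = v (e * (E f / f) - a) := by
  have hlog {x : L} (hx0 : x ≠ 0) (hx : v x < 1) : ∃ m : ℕ, m ≠ 0 ∧ v x = exp (-m : ℤ) := by
    have hlog : log (v x) < 0 := by rwa [log_lt_iff_lt_exp (by simpa using hx0), exp_zero]
    refine ⟨(log (v x)).natAbs, by omega, ?_⟩
    rw [Int.ofNat_natAbs_of_nonpos hlog.le, neg_neg, exp_log (by simpa using hx0)]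
  obtain ⟨a, ha, hfa⟩ := hlog hf0 hf
  obtain ⟨e, he, hse⟩ := hlog hs0 hs
  refine ⟨a, e, f ^ e / s ^ a, ha, he, ?_⟩
  have hh : v (f ^ e / s ^ a) = 1 := by
    rw [map_div₀, map_pow, map_pow, hfa, hse, ← exp_nsmul, ← exp_nsmul, smul_neg, smul_neg,
      nsmul_eq_mul, nsmul_eq_mul, mul_comm, div_self exp_ne_zero]
  have hEh : E (f ^ e / s ^ a) = f ^ e / s ^ a * (e * (E f / f) - a) := by
    obtain ⟨e, rfl⟩ := Nat.exists_eq_succ_of_ne_zero he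
    obtain ⟨a, rfl⟩ := Nat.exists_eq_succ_of_ne_zero ha
    simp only [Derivation.leibniz_div, Derivation.leibniz_pow, hEs, smul_eq_mul, nsmul_eq_mul,
      Nat.succ_eq_add_one, Nat.add_sub_cancel]
    field_simp
    ring
  exact ⟨hh, by rw [hEh, map_mul, hh, one_mul]⟩

/- Among the `f` violating the bound take one with `v (E f)` maximal. The unit `f ^ e / s ^ a` then
yields a violation `g` with `v (E g) = v (E f) / v f`, which is larger. -/
theorem valuation_derivation_le [CharZero k] (hv : ∀ c : k, v (algebraMap k L c) ≤ 1)
    (halg : ∀ h, v h ≤ 1 → ∃ q : k[X], q ≠ 0 ∧ v (Polynomial.aeval h q) < 1)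
    (hbdd : ∃ C : ℤᵐ⁰, ∀ f, v f ≤ 1 → v (E f) ≤ C)
    {s : L} (hs0 : s ≠ 0) (hs : v s < 1) (hEs : E s = s) {f : L} (hf : v f < 1) :
    v (E f) ≤ v f := by
  by_contra! hlt
  have hexp {x : L} (hx : 0 < v x) : v x = exp (log (v x)) := (exp_log hx.ne').symm
  obtain ⟨C, hC⟩ := hbdd
  obtain ⟨m, ⟨f, hf, hlt, hfm⟩, hmax⟩ := Int.exists_greatest_of_bdd
    (P := fun z ↦ ∃ f, v f < 1 ∧ v f < v (E f) ∧ v (E f) = exp z)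
    ⟨log C, fun z ⟨f, hf, _, hz⟩ ↦
      have hzC : exp z ≤ C := hz ▸ hC f hf.le
      (le_log_iff_exp_le (exp_pos.trans_le hzC).ne').mpr hzC⟩
    ⟨_, f, hf, hlt, hexp (zero_le.trans_lt hlt)⟩
  have hf0 : f ≠ 0 := by rintro rfl; simp at hlt
  have hvf : 0 < v f := v.pos_iff.mpr hf0
  obtain ⟨a, e, h, ha, he, hh, hEh⟩ := exists_unit_valuation_derivation_eq hs0 hs hEs hf0 hf
  obtain ⟨g, hg, hEg⟩ := exists_valuation_lt_one_and_derivation_eq (E := E) hv hh.le (halg h hh.le)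
  have hEgf : v (E g) = v (E f) / v f := by
    have hquot : v (e * (E f / f)) = v (E f) / v f := by
      rw [map_mul, valuation_natCast_eq_one hv he, one_mul, map_div₀]
    rw [hEg, hEh, v.map_sub_eq_of_lt_left, hquot]
    rw [hquot, valuation_natCast_eq_one hv ha]
    exact (one_lt_div₀ hvf).mpr hlt
  have hg1 : v g < v (E g) := hg.trans (hEgf ▸ (one_lt_div₀ hvf).mpr hlt)
  have hle : v (E g) ≤ v (E f) := by
    rw [hexp (zero_le.trans_lt hg1), hfm]
    exact exp_le_exp.mpr (hmax _ ⟨g, hg, hg1, hexp (zero_le.trans_lt hg1)⟩)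
  refine hle.not_gt ?_
  rw [hEgf]
  exact (lt_div_iff₀ hvf).mpr (mul_lt_of_lt_one_right (hvf.trans hlt) hf)

theorem valuation_derivation_eq [CharZero k] (hv : ∀ c : k, v (algebraMap k L c) ≤ 1)
    (halg : ∀ h, v h ≤ 1 → ∃ q : k[X], q ≠ 0 ∧ v (Polynomial.aeval h q) < 1)
    (hbdd : ∃ C : ℤᵐ⁰, ∀ f, v f ≤ 1 → v (E f) ≤ C)
    {s : L} (hs0 : s ≠ 0) (hs : v s < 1) (hEs : E s = s) {f : L} (hf : v f < 1) :
    v (E f) = v f := by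
  obtain rfl | hf0 := eq_or_ne f 0
  · simp
  obtain ⟨a, e, h, ha, he, hh, hEh⟩ := exists_unit_valuation_derivation_eq hs0 hs hEs hf0 hf
  obtain ⟨g, hg, hEg⟩ := exists_valuation_lt_one_and_derivation_eq (E := E) hv hh.le (halg h hh.le)
  have hlt : v (e * (E f / f) - a) < v (a : L) := by
    rw [← hEh, ← hEg, valuation_natCast_eq_one hv ha]
    exact (valuation_derivation_le hv halg hbdd hs0 hs hEs hg).trans_lt hg
  have hquot := v.map_add_eq_of_lt_left hlt
  rw [add_sub_cancel, map_mul, valuation_natCast_eq_one hv ha, valuation_natCast_eq_one hv he,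
    one_mul, map_div₀] at hquot
  exact (div_eq_one_iff_eq (v.ne_zero_iff.mpr hf0)).mp hquot

end LogarithmicDerivation

section Specialization

variable {k R S : Type*} [CommRing k] [CommRing R] [CommRing S] [Algebra k R] [Algebra k S]

theorem isIntegral_map_of_forall_isIntegral_map {A : Type*} [CommRing A] [Algebra k A] [Algebra A R]
    [IsScalarTower k A R] {b : R} (hb : IsIntegral A b) (ψ : R →ₐ[k] S)
    (hψ : ∀ a : A, IsIntegral k (ψ (algebraMap A R a))) : IsIntegral k (ψ b) := by
  have hψb : IsIntegral (integralClosure k S) (ψ b) :=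
    hb.map_of_comp_eq
      (((ψ.comp (IsScalarTower.toAlgHom k A R)).codRestrict (integralClosure k S) hψ :) :
        A →+* integralClosure k S) (ψ : R →+* S) rfl
  exact isIntegral_trans _ hψb

theorem isIntegral_map_of_isIntegral_adjoin {X : Set R} {b : R}
    (hb : IsIntegral (Algebra.adjoin k X) b) (ψ : R →ₐ[k] S) (hψ : ∀ x ∈ X, IsIntegral k (ψ x)) :
    IsIntegral k (ψ b) := by
  have hX : Algebra.adjoin k X ≤ (integralClosure k S).comap ψ := Algebra.adjoin_le hψ
  exact isIntegral_map_of_forall_isIntegral_map hb ψ fun a ↦ hX a.2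

end Specialization

section ConstantField

variable {k L : Type*} [Field k] [CharZero k] [Field L] [Algebra k L] (E : Derivation k L L)

theorem derivation_eq_zero_of_isIntegral {x : L} (hx : IsIntegral k x) : E x = 0 := by
  have hder := E.map_aeval (minpoly k x) x
  rw [minpoly.aeval, map_zero, eq_comm, smul_eq_mul] at hder
  exact (mul_eq_zero.mp hder).resolve_left
    ((minpoly.irreducible hx).separable.aeval_derivative_ne_zero (minpoly.aeval k x))

variable {E}

theorem transcendental_of_derivation_ne_zero {s : L} (hs : E s ≠ 0) : Transcendental k s :=
  fun h ↦ hs (derivation_eq_zero_of_isIntegral E h.isIntegral)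

end ConstantField

theorem derivation_mem_adjoin {k L : Type*} [CommRing k] [CommRing L] [Algebra k L]
    (E : Derivation k L L) {X : Set L} (hX : ∀ x ∈ X, E x ∈ Algebra.adjoin k X) {a : L}
    (ha : a ∈ Algebra.adjoin k X) : E a ∈ Algebra.adjoin k X := by
  induction ha using Algebra.adjoin_induction with
  | mem x hx => exact hX x hx
  | algebraMap r => simp
  | add x y _ _ hx hy => simpa using add_mem hx hy
  | mul x y hx hy hEx hEy => simpa using add_mem (mul_mem hx hEy) (mul_mem hy hEx)

section DedekindDomain

open IsDedekindDomain WithZero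

variable {k L O : Type*} [Field k] [Field L] [Algebra k L] [CommRing O] [IsDedekindDomain O]
  [Algebra O L] [IsFractionRing O L]

theorem exists_valuation_derivation_algebraMap_le (E : Derivation k L L) (A : Type*) [CommRing A]
    [Algebra A L] [Algebra A O] [IsScalarTower A O L] [Module.Finite A O]
    (hA : ∀ a : A, E (algebraMap A L a) ∈ (algebraMap A L).range) (v : HeightOneSpectrum O) :
    ∃ C, ∀ o : O, v.valuation L (E (algebraMap O L o)) ≤ C := by
  obtain ⟨t, ht⟩ := Module.Finite.fg_top (R := A) (M := O)
  obtain ⟨C, hC⟩ := (insert 1 (t.image fun o ↦ v.valuation L (E (algebraMap O L o)))).exists_le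
  have hC1 : 1 ≤ C := hC 1 (mem_insert_self _ _)
  refine ⟨C, fun o ↦ ?_⟩
  have ho : o ∈ Submodule.span A (t : Set O) := ht ▸ Submodule.mem_top
  induction ho using Submodule.span_induction with
  | mem o ho => exact hC _ (mem_insert_of_mem (mem_image_of_mem _ ho))
  | zero => simp
  | add o o' _ _ h h' =>
    rw [map_add, map_add]
    exact (v.valuation L).map_add_le h h'
  | smul a o _ h =>
    obtain ⟨a', ha'⟩ := hA a
    rw [Algebra.smul_def, map_mul, ← IsScalarTower.algebraMap_apply, E.leibniz, ← ha',
      IsScalarTower.algebraMap_apply A O L, IsScalarTower.algebraMap_apply A O L]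
    refine (v.valuation L).map_add_le ?_ ?_
    · rw [smul_eq_mul, map_mul]
      exact mul_le_of_le_one_of_le (v.valuation_le_one _) h
    · rw [smul_eq_mul, map_mul]
      exact (mul_le_one' (v.valuation_le_one _) (v.valuation_le_one _)).trans hC1

theorem exists_valuation_derivation_le (E : Derivation k L L) (v : HeightOneSpectrum O)
    (hO : ∃ C, ∀ o : O, v.valuation L (E (algebraMap O L o)) ≤ C) :
    ∃ C, ∀ f, v.valuation L f ≤ 1 → v.valuation L (E f) ≤ C := by
  obtain ⟨C, hC⟩ := hO
  refine ⟨C, fun f hf ↦ ?_⟩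
  obtain ⟨a, ⟨b, hb⟩, hab⟩ := v.exists_primeCompl_mul_eq_of_integer f hf
  have hvb : v.valuation L (algebraMap O L b) = 1 := (v.valuation_eq_one_iff_notMem).mpr hb
  have hE : E f * algebraMap O L b = E (algebraMap O L a) - f * E (algebraMap O L b) := by
    rw [← hab, E.leibniz, smul_eq_mul, smul_eq_mul]
    ring
  calc v.valuation L (E f) = v.valuation L (E f * algebraMap O L b) := by simp [hvb]
    _ ≤ C := by
      rw [hE]
      refine (v.valuation L).map_sub_le (hC a) ?_
      rw [map_mul]
      exact mul_le_of_le_one_of_le hf (hC b)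

open Polynomial in
theorem valuation_aeval_sub_aeval_le (w : Valuation L ℤᵐ⁰)
    (hw : ∀ c : k, w (algebraMap k L c) ≤ 1) {x y : L} (hx : w x ≤ 1) (hy : w y ≤ 1) (q : k[X]) :
    w (Polynomial.aeval x q - Polynomial.aeval y q) ≤ w (x - y) := by
  rw [Polynomial.aeval_eq_sum_range, Polynomial.aeval_eq_sum_range, ← Finset.sum_sub_distrib]
  refine w.map_sum_le fun i _ ↦ ?_
  have hsum : w (∑ j ∈ range i, x ^ j * y ^ (i - 1 - j)) ≤ 1 := w.map_sum_le fun j _ ↦ by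
    rw [map_mul, map_pow, map_pow]
    exact mul_le_one' (pow_le_one' hx _) (pow_le_one' hy _)
  rw [← smul_sub, Algebra.smul_def, ← geom_sum₂_mul, map_mul, map_mul, ← mul_assoc]
  exact mul_le_of_le_one_left' (mul_le_one' (hw _) hsum)

open Polynomial in
theorem exists_valuation_aeval_lt_one [Algebra k O] [IsScalarTower k O L] (A : Type*) [CommRing A]
    [Algebra k A] [Algebra A O] [IsScalarTower k A O] [Algebra.IsIntegral A O]
    {v : HeightOneSpectrum O}
    (hA : ∀ a : A, IsIntegral k (Ideal.Quotient.mk v.asIdeal (algebraMap A O a)))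
    {h : L} (hh : v.valuation L h ≤ 1) :
    ∃ q : k[X], q ≠ 0 ∧ v.valuation L (Polynomial.aeval h q) < 1 := by
  obtain ⟨c, hc⟩ := v.exists_valuation_sub_lt_of_integer (K := L) hh 1
  have hint : IsIntegral k (Ideal.Quotient.mkₐ k v.asIdeal c) :=
    isIntegral_map_of_forall_isIntegral_map (Algebra.IsIntegral.isIntegral (R := A) c) _ hA
  obtain ⟨q, hq, hqc⟩ := hint
  refine ⟨q, hq.ne_zero, ?_⟩
  have hcq : v.valuation L (Polynomial.aeval (algebraMap O L c) q) < 1 := by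
    rw [Polynomial.aeval_algebraMap_apply, v.valuation_lt_one_iff_mem]
    rwa [← Polynomial.aeval_def, Polynomial.aeval_algHom_apply, Ideal.Quotient.mkₐ_eq_mk,
      Ideal.Quotient.eq_zero_iff_mem] at hqc
  rw [← sub_add_cancel (Polynomial.aeval h q) (Polynomial.aeval (algebraMap O L c) q)]
  refine (v.valuation L).map_add_lt ((valuation_aeval_sub_aeval_le _ ?_ hh
    (v.valuation_le_one c) q).trans_lt ?_) hcq
  · intro r
    rw [IsScalarTower.algebraMap_apply k O L]
    exact v.valuation_le_one _
  · rwa [Valuation.map_sub_swap]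

end DedekindDomain

section IntegralQuotient

open IsDedekindDomain WithZero IntermediateField
open scoped IntermediateField.algebraAdjoinAdjoin

variable {k L : Type*} [Field k] [CharZero k] [Field L] [Algebra k L] {E : Derivation k L L}

theorem valuation_derivation_eq_of_isIntegral_adjoin {O : Type*} [CommRing O] [IsDedekindDomain O]
    [Algebra O L] [IsFractionRing O L] [Algebra k O] [IsScalarTower k O L] {s : L}
    [Algebra (Algebra.adjoin k {s}) O] [IsScalarTower (Algebra.adjoin k {s}) O L]
    [IsScalarTower k (Algebra.adjoin k {s}) O] [Module.Finite (Algebra.adjoin k {s}) O]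
    (hs0 : s ≠ 0) (hEs : E s = s) {v : HeightOneSpectrum O} (hs : v.valuation L s < 1)
    {f : L} (hf : v.valuation L f < 1) : v.valuation L (E f) = v.valuation L f := by
  set A := Algebra.adjoin k {s}
  have hk (c : k) : v.valuation L (algebraMap k L c) ≤ 1 := by
    rw [IsScalarTower.algebraMap_apply k O L]
    exact v.valuation_le_one _
  have hEA (a : A) : E (algebraMap A L a) ∈ (algebraMap A L).range := by
    refine ⟨⟨E a, derivation_mem_adjoin E (fun x hx ↦ ?_) a.2⟩, rfl⟩
    rw [hx, hEs]
    exact Algebra.self_mem_adjoin_singleton k s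
  have hA (a : A) : IsIntegral k (Ideal.Quotient.mk v.asIdeal (algebraMap A O a)) := by
    obtain ⟨p, hp⟩ := Algebra.adjoin_eq_exists_aeval k s a
    obtain rfl : Polynomial.aeval ⟨s, Algebra.self_mem_adjoin_singleton k s⟩ p = a :=
      Subtype.ext ((Polynomial.coe_aeval_mk_apply ..).trans hp)
    have hs' : algebraMap A O ⟨s, Algebra.self_mem_adjoin_singleton k s⟩ ∈ v.asIdeal := by
      refine (v.valuation_lt_one_iff_mem (K := L) _).mp ?_
      change v.valuation L (algebraMap O L _) < 1
      rwa [← IsScalarTower.algebraMap_apply]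
    rw [← Polynomial.aeval_algebraMap_apply,
      ← Ideal.Quotient.mkₐ_eq_mk k, ← Polynomial.aeval_algHom_apply,
      Ideal.Quotient.mkₐ_eq_mk, Ideal.Quotient.eq_zero_iff_mem.mpr hs',
      ← Polynomial.coeff_zero_eq_aeval_zero']
    exact isIntegral_algebraMap
  exact valuation_derivation_eq hk (fun h hh ↦ exists_valuation_aeval_lt_one A hA hh)
    (exists_valuation_derivation_le E v (exists_valuation_derivation_algebraMap_le E A hEA v))
    hs0 hs hEs hf

theorem isIntegral_adjoin_div {s : L} (hs0 : s ≠ 0) (hEs : E s = s)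
    [FiniteDimensional k⟮s⟯ L] {f f' b : L} {N : ℕ} (hf : IsIntegral (Algebra.adjoin k {s}) f)
    (hf' : IsIntegral (Algebra.adjoin k {s}) f') (hb : IsIntegral (Algebra.adjoin k {s}) b)
    (hEf : E f = s * f') (hpow : f ^ N = s * b) : IsIntegral (Algebra.adjoin k {s}) (f / s) := by
  set A := Algebra.adjoin k {s}
  set O := integralClosure A L
  have : IsPrincipalIdealRing A := by
    have hs : Transcendental k s := transcendental_of_derivation_ne_zero (E := E) (by rwa [hEs])
    exact .of_surjective _ (Polynomial.algEquivOfTranscendental k s hs).surjective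
  have : IsFractionRing O L := integralClosure.isFractionRing_of_finite_extension k⟮s⟯ L
  have : IsDedekindDomain O := integralClosure.isDedekindDomain A k⟮s⟯ L
  have : Module.Finite A O := IsIntegralClosure.finite A k⟮s⟯ L O
  let s' : O := algebraMap A O ⟨s, Algebra.self_mem_adjoin_singleton k s⟩
  suffices hval : ∀ v : HeightOneSpectrum O, v.valuation L (f / s) ≤ 1 by
    obtain ⟨o, ho⟩ := HeightOneSpectrum.mem_integers_of_valuation_le_one L (f / s) hval
    exact ho ▸ o.2
  intro v
  have hint {x : L} (hx : IsIntegral A x) : v.valuation L x ≤ 1 := v.valuation_le_one (⟨x, hx⟩ : O)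
  rw [map_div₀]
  by_cases hs : s' ∈ v.asIdeal
  · have hvs : v.valuation L s < 1 := (v.valuation_lt_one_iff_mem s').mpr hs
    have hvf : v.valuation L f < 1 := by
      refine lt_of_pow_lt_pow_left' N ?_
      rw [one_pow, ← map_pow, hpow, map_mul]
      exact mul_lt_one_of_lt_of_le hvs (hint hb)
    have hvEf := valuation_derivation_eq_of_isIntegral_adjoin hs0 hEs hvs hvf
    rw [← hvEf, hEf, map_mul, mul_div_cancel_left₀ _ ((v.valuation L).ne_zero_iff.mpr hs0)]
    exact hint hf'
  · have hvs : v.valuation L s = 1 := (v.valuation_eq_one_iff_notMem (r := s')).mpr hs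
    rw [hvs, div_one]
    exact hint hf

end IntegralQuotient

/-! ### Euler derivations -/

section FieldOfConstants

variable {F L : Type*} [Field F] [Field L] [Algebra F L] (E : Derivation F L L)

/-- The field of constants of a derivation `E` of a field, over which `E` is linear. -/
def constantField : IntermediateField F L where
  carrier := {x | E x = 0}
  mul_mem' {x y} hx hy := by simp_all
  add_mem' {x y} hx hy := by simp_all
  algebraMap_mem' := E.map_algebraMap
  inv_mem' x hx := by simp_all [Derivation.leibniz_inv]

variable {E} in
theorem mem_constantField {x : L} : x ∈ constantField E ↔ E x = 0 := Iff.rfl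

/-- The derivation `E`, viewed as a derivation over its field of constants. -/
def constantFieldDerivation : Derivation (constantField E) L L :=
  .mk'
    { E.toLinearMap with
      map_smul' c x := by
        have hc : E (c : L) = 0 := c.2
        simp [Algebra.smul_def, hc] }
    E.leibniz

@[simp]
theorem constantFieldDerivation_apply (x : L) : constantFieldDerivation E x = E x := rfl

variable {E}

theorem div_mem_constantField {s t : L} (hs : E s = s) (ht : E t = t) :
    t / s ∈ constantField E := by
  rw [mem_constantField, E.leibniz_div, hs, ht, smul_eq_mul, smul_eq_mul, smul_eq_mul,
    mul_comm s t, sub_self, mul_zero]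

end FieldOfConstants

namespace NondegenerateAtInfinity

section EulerDerivation

open scoped IntermediateField IntermediateField.algebraAdjoinAdjoin

variable {σ ι F L : Type*} [Finite σ] [Finite ι] [Field F] [IsAlgClosed F] [Field L]
  [Algebra (MvPolynomial σ F) L] [Algebra F L] [IsScalarTower F (MvPolynomial σ F) L]
  {n : ℕ} {u : ι → MvPolynomial σ F} {E : Derivation F L L}

local notation "↑ᴸ" => algebraMap (MvPolynomial σ F) L

theorem isIntegral_adjoin_constantField (hu : NondegenerateAtInfinity n u) (hn : 0 < n)
    (hE : ∀ i, E (↑ᴸ (u i)) = ↑ᴸ (u i)) {i₀ : ι} (hi₀ : ↑ᴸ (u i₀) ≠ 0) (f : MvPolynomial σ F) :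
    IsIntegral (Algebra.adjoin (constantField E) {↑ᴸ (u i₀)}) (↑ᴸ f) := by
  set A := Algebra.adjoin (constantField E) {↑ᴸ (u i₀)}
  have hle : Algebra.adjoin F (Set.range u) ≤
      (A.restrictScalars F).comap (IsScalarTower.toAlgHom F (MvPolynomial σ F) L) := by
    refine Algebra.adjoin_le ?_
    rintro _ ⟨i, rfl⟩
    change ↑ᴸ (u i) ∈ A
    rw [← div_mul_cancel₀ (↑ᴸ (u i)) hi₀]
    exact mul_mem (A.algebraMap_mem ⟨_, div_mem_constantField (hE i₀) (hE i)⟩)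
      (Algebra.self_mem_adjoin_singleton _ _)
  exact (hu.isIntegral_adjoin hn f).map_of_comp_eq
    ((↑ᴸ.comp (Algebra.adjoin F (Set.range u)).val.toRingHom).codRestrict A fun a ↦ hle a.2)
    ↑ᴸ rfl

theorem isIntegral_adjoin_constantField_div_of_mem_span (hu : NondegenerateAtInfinity n u)
    (hn : 0 < n) (hE : ∀ i, E (↑ᴸ (u i)) = ↑ᴸ (u i)) {i₀ : ι} (hi₀ : ↑ᴸ (u i₀) ≠ 0)
    {f : MvPolynomial σ F} (hf : f ∈ Ideal.span (Set.range u)) :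
    IsIntegral (Algebra.adjoin (constantField E) {↑ᴸ (u i₀)}) (↑ᴸ f / ↑ᴸ (u i₀)) := by
  cases nonempty_fintype ι
  obtain ⟨g, rfl⟩ := Ideal.mem_span_range_iff_exists_fun.mp hf
  have hw (i : ι) : IsIntegral (constantField E) (↑ᴸ (u i) / ↑ᴸ (u i₀)) :=
    isIntegral_algebraMap (x := (⟨_, div_mem_constantField (hE i₀) (hE i)⟩ : constantField E))
  simp only [map_sum, map_mul, Finset.sum_div, mul_div_assoc]
  exact IsIntegral.sum _ fun i _ ↦
    (hu.isIntegral_adjoin_constantField hn hE hi₀ (g i)).mul (hw i).tower_top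

theorem finiteDimensional_adjoin_constantField [IsFractionRing (MvPolynomial σ F) L]
    (hu : NondegenerateAtInfinity n u) (hn : 0 < n)
    (hE : ∀ i, E (↑ᴸ (u i)) = ↑ᴸ (u i)) {i₀ : ι} (hi₀ : ↑ᴸ (u i₀) ≠ 0) :
    FiniteDimensional (constantField E)⟮↑ᴸ (u i₀)⟯ L := by
  have : Algebra.EssFiniteType (MvPolynomial σ F) L := .of_isLocalization L
    (nonZeroDivisors (MvPolynomial σ F))
  have : Algebra.EssFiniteType F L := .comp F (MvPolynomial σ F) L
  have : Algebra.EssFiniteType (constantField E) L := .of_comp F _ L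
  have : Algebra.EssFiniteType (constantField E)⟮↑ᴸ (u i₀)⟯ L := .of_comp (constantField E) _ L
  have hint (f : MvPolynomial σ F) : IsIntegral (constantField E)⟮↑ᴸ (u i₀)⟯ (↑ᴸ f) :=
    (hu.isIntegral_adjoin_constantField hn hE hi₀ f).tower_top
  have : Algebra.IsAlgebraic (constantField E)⟮↑ᴸ (u i₀)⟯ L := ⟨fun x ↦ by
    obtain ⟨a, b, -, rfl⟩ := IsFractionRing.div_surjective (A := MvPolynomial σ F) x
    rw [div_eq_mul_inv]
    exact (hint a).isAlgebraic.mul (hint b).isAlgebraic.inv⟩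
  exact Algebra.finite_of_essFiniteType_of_isAlgebraic

theorem isIntegral_constantField_div (hu : NondegenerateAtInfinity n u) (hn : 0 < n)
    (hE : ∀ i, E (↑ᴸ (u i)) = ↑ᴸ (u i)) {i₀ : ι} (hi₀ : ↑ᴸ (u i₀) ≠ 0) {f : MvPolynomial σ F}
    (hf : f.totalDegree ≤ n)
    (hint : IsIntegral (Algebra.adjoin (constantField E) {↑ᴸ (u i₀)}) (↑ᴸ f / ↑ᴸ (u i₀))) :
    IsIntegral (constantField E) (↑ᴸ f / ↑ᴸ (u i₀)) := by
  set s := ↑ᴸ (u i₀)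
  refine isIntegral_of_forall_mem_valuationSubring fun V hV ↦ ?_
  rcases V.mem_or_inv_mem s with hs | hs
  · have hle : Algebra.adjoin (constantField E) {s} ≤
        { V.toSubring with algebraMap_mem' := hV } :=
      Algebra.adjoin_le (Set.singleton_subset_iff.mpr hs)
    have hintV : IsIntegral V (↑ᴸ f / s) := hint.map_of_comp_eq
      ((Algebra.adjoin (constantField E) {s}).val.toRingHom.codRestrict V fun a ↦ hle a.2)
      (RingHom.id L) rfl
    obtain ⟨y, hy⟩ := IsIntegrallyClosed.isIntegral_iff.mp hintV
    exact hy ▸ y.2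
  · have hk {c : L} (hc : c ∈ constantField E) : V.valuation c ≤ 1 :=
      (V.valuation_le_one_iff c).mpr (hV ⟨c, hc⟩)
    have hs1 : 1 ≤ V.valuation s := by
      rw [← V.valuation_le_one_iff, map_inv₀] at hs
      exact (inv_le_one₀ ((V.valuation).pos_iff.mpr hi₀)).mp hs
    rw [← V.valuation_le_one_iff, map_div₀]
    refine div_le_one_of_le₀ ?_ zero_le
    have hC (c : F) : V.valuation (↑ᴸ (C c)) ≤ 1 :=
      hk (IsScalarTower.algebraMap_apply F (MvPolynomial σ F) L c ▸
        (constantField E).algebraMap_mem c)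
    rcases hu.valuation_le_one_or_exists_le hn (V.valuation.comap ↑ᴸ) hC hf with h | ⟨i, hi⟩
    · exact h.trans hs1
    · refine hi.trans ?_
      rw [Valuation.comap_apply, ← div_mul_cancel₀ (↑ᴸ (u i)) hi₀, map_mul]
      exact mul_le_of_le_one_left' (hk (div_mem_constantField (hE i₀) (hE i)))

theorem derivation_eq_self_of_totalDegree_le [CharZero F]
    (hu : NondegenerateAtInfinity n u) (hn : 0 < n)
    (hE : ∀ i, E (↑ᴸ (u i)) = ↑ᴸ (u i)) {i₀ : ι} (hi₀ : ↑ᴸ (u i₀) ≠ 0) {f : MvPolynomial σ F}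
    (hf : f.totalDegree ≤ n)
    (hint : IsIntegral (Algebra.adjoin (constantField E) {↑ᴸ (u i₀)}) (↑ᴸ f / ↑ᴸ (u i₀))) :
    E (↑ᴸ f) = ↑ᴸ f := by
  have hzero : E (↑ᴸ f / ↑ᴸ (u i₀)) = 0 :=
    derivation_eq_zero_of_isIntegral (constantFieldDerivation E)
      (hu.isIntegral_constantField_div hn hE hi₀ hf hint)
  conv_lhs => rw [← div_mul_cancel₀ (↑ᴸ f) hi₀, E.leibniz, hzero, hE i₀]
  rw [smul_zero, add_zero, smul_eq_mul, div_mul_cancel₀ _ hi₀]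

end EulerDerivation

end NondegenerateAtInfinity

theorem lie_eq_self_of_isTranscendenceBasis {ι F L : Type*} [Field F] [Field L] [Algebra F L]
    [CharZero F] {w : ι → L} (hw : IsTranscendenceBasis F w) {D E : Derivation F L L}
    (hE : ∀ i, E (w i) = w i) (hD : ∀ i, E (D (w i)) = 0) : ⁅D, E⁆ = D :=
  (existsUnique_derivation_of_isTranscendenceBasis hw fun i ↦ D (w i)).unique
    (fun i ↦ by rw [Derivation.commutator_apply, hE, hD, sub_zero]) fun _ ↦ rfl

theorem derivation_apply_eq_nsmul_of_lie_eq_self {R A : Type*} [CommRing R] [CommRing A]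
    [Algebra R A] {D E : Derivation R A A} (hlie : ⁅D, E⁆ = D) {n : ℕ} {g : A}
    (hg : E ((n + 1) • g - n • E g) = (n + 1) • g - n • E g) :
    E (D g) = n • E (E (D g)) := by
  have hDE (x : A) : D (E x) = D x + E (D x) := by
    rw [← sub_eq_iff_eq_add, ← Derivation.commutator_apply, hlie]
  have hker (x : A) (hx : E x = x) : E (D x) = 0 := by
    have := hDE x
    rwa [hx, left_eq_add] at this
  have hDg : D ((n + 1) • g - n • E g) = D g - n • E (D g) := by
    rw [map_sub, map_nsmul, map_nsmul, hDE]
    module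
  have hEDg := hker _ hg
  rwa [hDg, map_sub, map_nsmul, sub_eq_zero] at hEDg

section Legendre

variable {σ R : Type*} [Fintype σ] [CommRing R]

/-- The Legendre transform `∑ xᵢ ∂ᵢf - f` of a polynomial, written as a polynomial in the original
coordinates `xᵢ` instead of the dual coordinates `∂ᵢf`. -/
noncomputable def legendreTransform (f : MvPolynomial σ R) : MvPolynomial σ R :=
  ∑ i, X i * pderiv i f - f

theorem derivation_legendreTransform {M : Type*} [AddCommGroup M] [Module R M]
    [Module (MvPolynomial σ R) M] [IsScalarTower R (MvPolynomial σ R) M]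
    (D : Derivation R (MvPolynomial σ R) M) (f : MvPolynomial σ R) :
    D (legendreTransform f) = ∑ i, (X i : MvPolynomial σ R) • D (pderiv i f) := by
  simp only [legendreTransform, map_sub, map_sum, D.leibniz, Finset.sum_add_distrib,
    ← derivation_eq_sum_pderiv_smul D f, add_sub_cancel_right]

theorem derivation_algebraMap_legendreTransform {B : Type*} [CommRing B] [Algebra R B]
    [Algebra (MvPolynomial σ R) B] [IsScalarTower R (MvPolynomial σ R) B] (D : Derivation R B B)
    (f : MvPolynomial σ R) : D (algebraMap _ B (legendreTransform f)) =
      ∑ i, algebraMap _ B (X i : MvPolynomial σ R) * D (algebraMap _ B (pderiv i f)) := by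
  refine (derivation_legendreTransform (D.compAlgebraMap (MvPolynomial σ R)) f).trans ?_
  simp [Algebra.smul_def]

theorem totalDegree_sum_X_mul_pderiv_sub_le {n : ℕ} (hn : 0 < n) {f : MvPolynomial σ R}
    (hf : f.totalDegree ≤ n + 1) :
    (∑ i, X i * pderiv i f - (n + 1) • f).totalDegree ≤ n := by
  set g := f - homogeneousComponent (n + 1) f
  have hg : g.totalDegree ≤ n - 1 + 1 := by
    have := totalDegree_sub_homogeneousComponent_lt (Nat.succ_pos n) hf
    change g.totalDegree < n + 1 at this
    omega
  have hEuler : ∑ i, X i * pderiv i f - (n + 1) • f =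
      ∑ i, X i * pderiv i g - (n + 1) • g := by
    simp only [g, map_sub, mul_sub, Finset.sum_sub_distrib, smul_sub,
      (homogeneousComponent_isHomogeneous (n + 1) f).sum_X_mul_pderiv]
    ring
  rw [hEuler]
  refine (totalDegree_sub _ _).trans (max_le (totalDegree_finsetSum_le fun i _ ↦ ?_) ?_)
  · refine (totalDegree_mul _ _).trans ?_
    have := totalDegree_pderiv_le i hg
    have := (isHomogeneous_X R i).totalDegree_le
    omega
  · exact (totalDegree_smul_le _ _).trans (by omega)

theorem sum_X_mul_pderiv_sub_eq_smul_legendreTransform_sub (n : ℕ) (f : MvPolynomial σ R) :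
    ∑ i, X i * pderiv i f - (n + 1) • f =
      (n + 1) • legendreTransform f - n • ∑ i, X i * pderiv i f := by
  rw [legendreTransform]
  module

end Legendre

namespace NondegenerateAtInfinity

section Gradient

variable {σ F L : Type*} [Field F] [IsAlgClosed F] [Field L]
  [Algebra (MvPolynomial σ F) L] [Algebra F L] [IsScalarTower F (MvPolynomial σ F) L]
  [IsFractionRing (MvPolynomial σ F) L] {n : ℕ}

local notation "↑ᴸ" => algebraMap (MvPolynomial σ F) L

theorem isTranscendenceBasis [Finite σ] {u : σ → MvPolynomial σ F}
    (hu : NondegenerateAtInfinity n u) (hn : 0 < n) : IsTranscendenceBasis F fun i ↦ ↑ᴸ (u i) := by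
  have : Algebra.IsIntegral (Algebra.adjoin F (Set.range u)) (MvPolynomial σ F) :=
    ⟨hu.isIntegral_adjoin hn⟩
  have : Algebra.IsAlgebraic (MvPolynomial σ F) L :=
    IsLocalization.isAlgebraic L (nonZeroDivisors (MvPolynomial σ F))
  have hbasis : IsTranscendenceBasis F u :=
    Algebra.IsAlgebraic.isTranscendenceBasis_of_lift_le_trdeg_of_finite F u
      (by simp [MvPolynomial.trdeg_of_isDomain])
  exact hbasis.algebraMap_comp

variable {H : MvPolynomial σ F}

section

variable [Fintype σ] {E : Derivation F L L}

theorem isIntegral_legendreTransform_div [CharZero F]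
    (hH : NondegenerateAtInfinity n fun i ↦ pderiv i H) (hn : 0 < n)
    (hcrit : ∀ z, (∀ i, eval z (pderiv i H) = 0) → eval z H = 0)
    (hE : ∀ i, E (↑ᴸ (pderiv i H)) = ↑ᴸ (pderiv i H)) {i₀ : σ} (hi₀ : ↑ᴸ (pderiv i₀ H) ≠ 0) :
    IsIntegral (Algebra.adjoin (constantField E) {↑ᴸ (pderiv i₀ H)})
      (↑ᴸ (legendreTransform H) / ↑ᴸ (pderiv i₀ H)) := by
  set s := ↑ᴸ (pderiv i₀ H)
  have hint := hH.isIntegral_adjoin_constantField hn hE hi₀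
  have hrad : legendreTransform H ∈ (Ideal.span (Set.range fun i ↦ pderiv i H)).radical :=
    mem_radical_span_of_forall_eval_eq_zero fun z hz ↦ by
      simp [legendreTransform, hz, hcrit z hz]
  obtain ⟨N, hN⟩ := Ideal.mem_radical_iff.mp hrad
  have := hH.finiteDimensional_adjoin_constantField hn hE hi₀
  refine isIntegral_adjoin_div (E := constantFieldDerivation E) (N := N) hi₀ (hE i₀) (hint _)
    (hH.isIntegral_adjoin_constantField_div_of_mem_span hn hE hi₀
      (Ideal.mem_span_range_iff_exists_fun.mpr ⟨X, rfl⟩))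
    (hH.isIntegral_adjoin_constantField_div_of_mem_span hn hE hi₀ hN) ?_ ?_
  · rw [constantFieldDerivation_apply, mul_div_cancel₀ _ hi₀,
      derivation_algebraMap_legendreTransform]
    simp [hE]
  · rw [mul_div_cancel₀ _ hi₀, map_pow]

theorem derivation_sum_X_mul_pderiv_sub [CharZero F]
    (hH : NondegenerateAtInfinity n fun i ↦ pderiv i H) (hn : 0 < n)
    (hdeg : H.totalDegree ≤ n + 1)
    (hcrit : ∀ z, (∀ i, eval z (pderiv i H) = 0) → eval z H = 0)
    (hE : ∀ i, E (↑ᴸ (pderiv i H)) = ↑ᴸ (pderiv i H)) {i₀ : σ} (hi₀ : ↑ᴸ (pderiv i₀ H) ≠ 0) :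
    E (↑ᴸ (∑ i, X i * pderiv i H - (n + 1) • H)) = ↑ᴸ (∑ i, X i * pderiv i H - (n + 1) • H) := by
  refine hH.derivation_eq_self_of_totalDegree_le hn hE hi₀
    (totalDegree_sum_X_mul_pderiv_sub_le hn hdeg) ?_
  rw [sum_X_mul_pderiv_sub_eq_smul_legendreTransform_sub, map_sub, map_nsmul, map_nsmul, sub_div,
    smul_div_assoc, smul_div_assoc]
  exact ((hH.isIntegral_legendreTransform_div hn hcrit hE hi₀).nsmul _).sub
    ((hH.isIntegral_adjoin_constantField_div_of_mem_span hn hE hi₀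
      (Ideal.mem_span_range_iff_exists_fun.mpr ⟨X, rfl⟩)).nsmul _)

end

theorem exists_derivation_apply_pderiv_and_apply_apply_X [Finite σ] [Nonempty σ] [CharZero F]
    (hH : NondegenerateAtInfinity n fun i ↦ pderiv i H) (hn : 0 < n)
    (hdeg : H.totalDegree ≤ n + 1)
    (hcrit : ∀ z, (∀ i, eval z (pderiv i H) = 0) → eval z H = 0) :
    ∃ T : Derivation F L L, (∀ i, T (↑ᴸ (pderiv i H)) = n * ↑ᴸ (pderiv i H)) ∧
      ∀ i, T (T (↑ᴸ (X i))) = T (↑ᴸ (X i)) := by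
  classical
  cases nonempty_fintype σ
  have hbasis := hH.isTranscendenceBasis (L := L) hn
  obtain ⟨E, hE, -⟩ := existsUnique_derivation_of_isTranscendenceBasis hbasis
    fun i ↦ ↑ᴸ (pderiv i H)
  refine ⟨n • E, fun i ↦ by simp [hE], fun j ↦ ?_⟩
  obtain ⟨D, hD, -⟩ := existsUnique_derivation_of_isTranscendenceBasis hbasis
    (Pi.single j 1)
  have hlie : ⁅D, E⁆ = D := lie_eq_self_of_isTranscendenceBasis hbasis hE fun i ↦ by
    rw [hD, Pi.single_apply]
    split_ifs <;> simp
  set G := ↑ᴸ (legendreTransform H) with hG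
  have hDG : D G = ↑ᴸ (X j) := by
    rw [hG, derivation_algebraMap_legendreTransform]
    simp [hD, Pi.single_apply]
  have hEG : E G = ↑ᴸ (∑ i, X i * pderiv i H) := by
    rw [hG, derivation_algebraMap_legendreTransform]
    simp [hE]
  have hK : ↑ᴸ (∑ i, X i * pderiv i H - (n + 1) • H) = (n + 1) • G - n • E G := by
    rw [hEG, ← map_nsmul, ← map_nsmul, ← map_sub,
      ← sum_X_mul_pderiv_sub_eq_smul_legendreTransform_sub]
  have hEX : E (D G) = n • E (E (D G)) := derivation_apply_eq_nsmul_of_lie_eq_self hlie <| by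
    rw [← hK]
    exact hH.derivation_sum_X_mul_pderiv_sub hn hdeg hcrit hE
      (hbasis.1.ne_zero (Classical.arbitrary σ))
  rw [hDG] at hEX
  simp only [Derivation.smul_apply, map_nsmul, ← hEX]

end Gradient

end NondegenerateAtInfinity

/-! ### Scaling towards the critical point -/

theorem exists_algebraMap_eq_of_isIntegral {F S : Type*} [Field F] [IsAlgClosed F] [CommRing S]
    [IsDomain S] [Algebra F S] {x : S} (hx : IsIntegral F x) : ∃ r, algebraMap F S r = x := by
  obtain ⟨r, hr⟩ := (IsAlgClosed.algebraMap_bijective_of_isIntegral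
    (k := F) (K := integralClosure F S)).2 ⟨x, hx⟩
  exact ⟨r, congrArg Subtype.val hr⟩

section Scaling

open Polynomial (monomial)

theorem eq_monomial_of_apply_coeff_eq {F L : Type*} [Field F] [CharZero F] [Field L] [Algebra F L]
    (T : Module.End F L) {p : Polynomial L} (hp : ∀ k, T (p.coeff k) = k * p.coeff k) {n : ℕ}
    (hn : T (p.eval 1) = n * p.eval 1) : p = monomial n (p.eval 1) := by
  set q := p - monomial n (p.eval 1)
  have hq (k : ℕ) : q.coeff k ∈ T.eigenspace (k : F) := by
    rw [Module.End.mem_eigenspace_iff, Algebra.smul_def, map_natCast]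
    simp only [q, Polynomial.coeff_sub, Polynomial.coeff_monomial, map_sub, hp, mul_sub]
    split_ifs with h
    · rw [hn, h]
    · simp
  have hind : iSupIndep fun k : ℕ ↦ T.eigenspace (k : F) :=
    T.eigenspaces_iSupIndep.comp Nat.cast_injective
  have hsum : ∑ k ∈ q.support, q.coeff k = 0 := by
    have : q.eval 1 = 0 := by simp [q]
    simpa [Polynomial.eval_eq_sum, Polynomial.sum] using this
  have hq0 : q = 0 := Polynomial.support_eq_empty.mp <| Finset.eq_empty_of_forall_notMem fun k hk ↦
    Polynomial.mem_support_iff.mp hk <|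
      iSupIndep_iff_finsetSum_eq_zero_imp_eq_zero _ |>.mp hind _ _ (fun k _ ↦ hq k) hsum k hk
  exact sub_eq_zero.mp hq0

variable {σ F L : Type*} [Field F] [Field L]
  [Algebra (MvPolynomial σ F) L] [Algebra F L] {T : Derivation F L L}

local notation "↑ᴸ" => algebraMap (MvPolynomial σ F) L

/-- Substitution along the flow of a derivation `T` for which each `T xᵢ` has weight one: the
component `T xᵢ` of `xᵢ` is multiplied by the parameter, its complement `xᵢ - T xᵢ` is kept. -/
noncomputable def scalingHom (T : Derivation F L L) : MvPolynomial σ F →ₐ[F] Polynomial L :=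
  aeval fun i ↦ .C (↑ᴸ (X i) - T (↑ᴸ (X i))) + .X * .C (T (↑ᴸ (X i)))

theorem derivation_coeff_scalingHom (hT : ∀ i, T (T (↑ᴸ (X i))) = T (↑ᴸ (X i)))
    (f : MvPolynomial σ F) (k : ℕ) :
    T ((scalingHom T f).coeff k) = k * (scalingHom T f).coeff k := by
  induction f using MvPolynomial.induction_on generalizing k with
  | C a =>
    rw [← MvPolynomial.algebraMap_eq, AlgHom.commutes, Polynomial.algebraMap_apply,
      Polynomial.coeff_C]
    split_ifs with h <;> simp [h]
  | add p q hp hq => simp [hp, hq, mul_add]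
  | mul_X p i hp =>
    have hX : scalingHom T (X i) = .C (↑ᴸ (X i) - T (↑ᴸ (X i))) + .X * .C (T (↑ᴸ (X i))) :=
      aeval_X _ _
    rw [map_mul, hX, mul_add, ← mul_assoc, Polynomial.coeff_add, Polynomial.coeff_mul_C,
      Polynomial.coeff_mul_C, map_add, Derivation.leibniz, Derivation.leibniz]
    cases k with
    | zero => simp [hT, hp]
    | succ k =>
      simp only [Polynomial.coeff_mul_X, smul_eq_mul, map_sub, hT, hp, Nat.cast_succ]
      ring

variable [IsScalarTower F (MvPolynomial σ F) L]

theorem eval_one_scalingHom (f : MvPolynomial σ F) : (scalingHom T f).eval 1 = ↑ᴸ f := by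
  have hcomp : ((Polynomial.aeval (1 : L)).restrictScalars F).comp (scalingHom T) =
      IsScalarTower.toAlgHom F (MvPolynomial σ F) L := by
    ext i
    simp [scalingHom]
  simpa [Polynomial.coe_aeval_eq_eval] using DFunLike.congr_fun hcomp f

theorem scalingHom_eq_monomial [CharZero F] (hT : ∀ i, T (T (↑ᴸ (X i))) = T (↑ᴸ (X i)))
    {n : ℕ} {f : MvPolynomial σ F} (hf : T (↑ᴸ f) = n * ↑ᴸ f) :
    scalingHom T f = monomial n (↑ᴸ f) := by
  have := eq_monomial_of_apply_coeff_eq (T : Module.End F L) (n := n)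
    (derivation_coeff_scalingHom hT f) (by simpa [eval_one_scalingHom] using hf)
  rwa [eval_one_scalingHom] at this

theorem aeval_line_eq_monomial [CharZero F] [FaithfulSMul (MvPolynomial σ F) L]
    (hT : ∀ i, T (T (↑ᴸ (X i))) = T (↑ᴸ (X i))) {r : σ → F}
    (hr : ∀ i, algebraMap F L (r i) = ↑ᴸ (X i) - T (↑ᴸ (X i))) {n : ℕ} {f : MvPolynomial σ F}
    (hf : T (↑ᴸ f) = n * ↑ᴸ f) (p : σ → F) :
    aeval (fun i ↦ Polynomial.C (r i) + .X * .C (p i - r i)) f = monomial n (eval p f) := by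
  set φ : MvPolynomial σ F →ₐ[F] Polynomial (MvPolynomial σ F) :=
    aeval fun i ↦ .C (C (r i)) + .X * .C (X i - C (r i))
  have hφL : (Polynomial.mapAlgHom (IsScalarTower.toAlgHom F (MvPolynomial σ F) L)).comp φ =
      scalingHom T := by
    ext1 i
    have hC : ↑ᴸ (C (r i)) = ↑ᴸ (X i) - T (↑ᴸ (X i)) :=
      (IsScalarTower.algebraMap_apply F (MvPolynomial σ F) L (r i)).symm.trans (hr i)
    simp [φ, scalingHom, hC]
  have hφ : φ f = monomial n f := by
    refine Polynomial.map_injective ↑ᴸ (FaithfulSMul.algebraMap_injective _ L) ?_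
    rw [Polynomial.map_monomial, ← scalingHom_eq_monomial hT hf, ← hφL]
    rfl
  have hφp : (Polynomial.mapAlgHom (aeval p)).comp φ =
      aeval fun i ↦ Polynomial.C (r i) + .X * .C (p i - r i) := by
    ext1 i
    simp [φ]
  rw [← hφp, AlgHom.comp_apply, hφ, Polynomial.coe_mapAlgHom, Polynomial.map_monomial]
  rfl

end Scaling

namespace NondegenerateAtInfinity

section Scaling

open Polynomial (monomial)

variable {σ ι F L : Type*} [Finite σ] [Finite ι] [Field F] [IsAlgClosed F] [Field L]
  [Algebra (MvPolynomial σ F) L] [Algebra F L] [IsScalarTower F (MvPolynomial σ F) L]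
  {n : ℕ} {u : ι → MvPolynomial σ F} {T : Derivation F L L}

local notation "↑ᴸ" => algebraMap (MvPolynomial σ F) L

theorem exists_algebraMap_eq_aeval_X {S : Type*} [CommRing S] [IsDomain S] [Algebra F S]
    (hu : NondegenerateAtInfinity n u) (hn : 0 < n) {ψ : MvPolynomial σ F →ₐ[F] S}
    (hψ : ∀ i, ψ (u i) = 0) (j : σ) : ∃ r, algebraMap F S r = ψ (X j) := by
  refine exists_algebraMap_eq_of_isIntegral
    (isIntegral_map_of_isIntegral_adjoin (hu.isIntegral_adjoin hn (X j)) ψ ?_)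
  rintro _ ⟨i, rfl⟩
  rw [hψ]
  exact isIntegral_zero

theorem exists_algebraMap_eq_X_sub [CharZero F] (hu : NondegenerateAtInfinity n u) (hn : 0 < n)
    (hTu : ∀ i, T (↑ᴸ (u i)) = n * ↑ᴸ (u i)) (hT : ∀ j, T (T (↑ᴸ (X j))) = T (↑ᴸ (X j))) (j : σ) :
    ∃ r : F, algebraMap F L r = ↑ᴸ (X j) - T (↑ᴸ (X j)) := by
  obtain ⟨r, hr⟩ := hu.exists_algebraMap_eq_aeval_X hn
    (ψ := ((Polynomial.aeval (0 : L)).restrictScalars F).comp (scalingHom T))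
    (fun i ↦ by simp [scalingHom_eq_monomial hT (hTu i), hn.ne']) j
  exact ⟨r, hr.trans (by simp [scalingHom])⟩

theorem existsUnique_forall_eval_eq_zero_of_derivation [CharZero F]
    [FaithfulSMul (MvPolynomial σ F) L] (hu : NondegenerateAtInfinity n u) (hn : 0 < n)
    (hTu : ∀ i, T (↑ᴸ (u i)) = n * ↑ᴸ (u i)) (hT : ∀ j, T (T (↑ᴸ (X j))) = T (↑ᴸ (X j))) :
    ∃! z : σ → F, ∀ i, eval z (u i) = 0 := by
  choose r hr using hu.exists_algebraMap_eq_X_sub hn hTu hT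
  have hline (p : σ → F) (i : ι) := aeval_line_eq_monomial hT hr (hTu i) p
  refine ⟨r, fun i ↦ ?_, fun p hp ↦ funext fun j ↦ ?_⟩
  · have hzero := congrArg (Polynomial.aeval (0 : F)) (hline r i)
    rw [comp_aeval_apply] at hzero
    simpa [hn.ne'] using hzero
  · obtain ⟨a, ha⟩ := hu.exists_algebraMap_eq_aeval_X hn
      (fun i ↦ (hline p i).trans (by rw [hp, map_zero])) j
    have hcoeff := congrArg (Polynomial.coeff · 1) ha
    simpa [Polynomial.coeff_C, sub_eq_zero, eq_comm] using hcoeff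

end Scaling

theorem existsUnique_forall_eval_pderiv_eq_zero {σ F : Type*} [Finite σ] [Field F]
    [IsAlgClosed F] [CharZero F] {n : ℕ} {H : MvPolynomial σ F}
    (hH : NondegenerateAtInfinity n fun i ↦ pderiv i H) (hn : 0 < n)
    (hdeg : H.totalDegree ≤ n + 1)
    (hcrit : ∀ z, (∀ i, eval z (pderiv i H) = 0) → eval z H = 0) :
    ∃! z : σ → F, ∀ i, eval z (pderiv i H) = 0 := by
  cases isEmpty_or_nonempty σ
  · exact ⟨isEmptyElim, isEmptyElim, fun _ _ ↦ Subsingleton.elim _ _⟩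
  obtain ⟨T, hTu, hT⟩ := hH.exists_derivation_apply_pderiv_and_apply_apply_X
    (L := FractionRing (MvPolynomial σ F)) hn hdeg hcrit
  exact hH.existsUnique_forall_eval_eq_zero_of_derivation hn hTu hT

end NondegenerateAtInfinity

theorem regularAtInfinity_iff {n : ℕ} {H : MvPolynomial (Fin 2) ℂ} : RegularAtInfinity n H ↔
    ∀ z, (∀ i, eval z (pderiv i (homogeneousComponent (n + 1) H)) = 0) → z = 0 := by
  simp [RegularAtInfinity, (finTwoArrowEquiv ℂ).forall_congr_left, Fin.forall_fin_two]

theorem stmt11_general {σ F : Type*} [Finite σ] [Field F] [IsAlgClosed F] [CharZero F]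
    (n : ℕ) (hn : 1 ≤ n) (H : MvPolynomial σ F) (hdeg : H.totalDegree ≤ n + 1)
    (hreg : ∀ z, (∀ i, eval z (pderiv i (homogeneousComponent (n + 1) H)) = 0) → z = 0) (γ : F)
    (honeval : ∀ z, (∀ i, eval z (pderiv i H) = 0) → eval z H = γ) :
    ∃! z : σ → F, ∀ i, eval z (pderiv i H) = 0 := by
  have hpderiv (i : σ) : pderiv i (H - C γ) = pderiv i H := by simp
  have hH : NondegenerateAtInfinity n fun i ↦ pderiv i H :=
    ⟨fun i ↦ totalDegree_pderiv_le i hdeg, by simpa only [homogeneousComponent_pderiv] using hreg⟩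
  simpa only [hpderiv] using NondegenerateAtInfinity.existsUnique_forall_eval_pderiv_eq_zero
    (H := H - C γ) (by simpa only [hpderiv] using hH) hn ((totalDegree_sub_C_le H γ).trans hdeg)
    fun z hz ↦ by simp [honeval z (by simpa only [hpderiv] using hz)]

/-- Lemma: one critical value implies one critical point.
A polynomial `H` of degree `n+1` regular at infinity having only one complex
critical value `γ` has a unique critical point. -/
theorem stmt11 (n : ℕ) (hn : 1 ≤ n) (H : MvPolynomial (Fin 2) ℂ)
    (hdeg : H.totalDegree = n + 1) (hreg : RegularAtInfinity n H)
    (γ : ℂ)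
    (honeval : ∀ x₀ y₀ : ℂ, eval ![x₀, y₀] (pderiv 0 H) = 0 →
      eval ![x₀, y₀] (pderiv 1 H) = 0 → eval ![x₀, y₀] H = γ) :
    ∃! z : ℂ × ℂ,
      eval ![z.1, z.2] (pderiv 0 H) = 0 ∧ eval ![z.1, z.2] (pderiv 1 H) = 0 := by
  have hgeneral := stmt11_general n hn H hdeg.le (regularAtInfinity_iff.mp hreg) γ
    (by simpa [(finTwoArrowEquiv ℂ).forall_congr_left, Fin.forall_fin_two] using honeval)
  simpa [(finTwoArrowEquiv ℂ).existsUnique_congr_left, Fin.forall_fin_two] using hgeneral
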